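/- (1) If P is a prime two-sided ideal of A_q, then P ∩ M_n is an admissible set. (2) If P is a Poisson prime ideal of the multi-parameter Poisson Weyl algebra A_1, then P ∩ M_n is an admissible set. -/

import Mathlib

/-!
In both algebras `z_i = z_{i-1} + y_i x_i`, and the (Poisson) commutator of `x_i` and `y_i` is a
nonzero scalar multiple of `z_i`: the scalar is `q_i - 1` for `A_q`, and `q̃_i'(1)` for `A₁`, which
is nonzero because `q_i ≠ 1` and the `μ_k` are independent over `ℚ`. So an ideal (Poisson ideal)
containing `y_i` or `x_i` contains `z_i`, and then `z_{i-1} = z_i - y_i x_i`.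

Conversely, let `P` contain `z_i` and `z_{i-1}`. Then `P` contains `y_i x_i`, and modulo `P` the
element `y_i` commutes up to scalars with every generator, `x_i` included (for `A_q`, both products
`x_i y_i` and `y_i x_i` lie in `P`; for `A₁`, the bracket `{x_i, y_i}` does). Hence
`y_i A_q ⊆ A_q y_i + P`, which gives `y_i A_q x_i ⊆ P`
(`mul_mul_mem_of_normal`); likewise `P + (y_i)` and `P + (x_i)` are Poisson ideals of `A₁`
(`isPoissonIdeal_sup_span`) whose product lies in `P`. Primeness then puts `y_i` or `x_i` in `P`.
-/

/-- A Poisson bracket on a commutative ring: a biadditive Lie bracket satisfying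
the Leibniz rule. -/
structure PoissonBr (R : Type) [CommRing R] where
  br : R → R → R
  add_left : ∀ a b c, br (a + b) c = br a c + br b c
  skew : ∀ a b, br a b = - br b a
  jacobi : ∀ a b c, br a (br b c) = br (br a b) c + br b (br a c)
  leibniz : ∀ a b c, br (a * b) c = a * br b c + br a c * b

/-- `I` is a Poisson ideal for the bracket `br`: an ideal with `{I, R} ⊆ I`. -/
def IsPoissonIdeal {R : Type} [CommRing R] (br : R → R → R) (I : Ideal R) : Prop :=
  ∀ a ∈ I, ∀ b, br a b ∈ I

/-- `P` is a Poisson prime ideal: a proper Poisson ideal such that `IJ ⊆ P` implies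
`I ⊆ P` or `J ⊆ P` for all Poisson ideals `I`, `J`. -/
def IsPoissonPrime {R : Type} [CommRing R] (br : R → R → R) (P : Ideal R) : Prop :=
  IsPoissonIdeal br P ∧ P ≠ ⊤ ∧
    ∀ I J : Ideal R, IsPoissonIdeal br I → IsPoissonIdeal br J →
      (∀ a ∈ I, ∀ b ∈ J, a * b ∈ P) → I ≤ P ∨ J ≤ P

/-- A prime two-sided ideal of a (not necessarily commutative) ring: a proper
two-sided ideal `P` such that `IJ ⊆ P` implies `I ⊆ P` or `J ⊆ P`. -/
def IsPrimeTS {R : Type} [Ring R] (P : TwoSidedIdeal R) : Prop :=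
  P ≠ ⊤ ∧ ∀ I J : TwoSidedIdeal R, (∀ a ∈ I, ∀ b ∈ J, a * b ∈ P) → I ≤ P ∨ J ≤ P

/-- The defining relations of the algebra `A_q` (the rescaled multi-parameter
quantized Weyl algebra), on generators `Sum.inl i = y_i`, `Sum.inr i = x_i`. -/
inductive AqRel (n : ℕ) (q : Fin n → ℂ) (lam : Fin n → Fin n → ℂ) :
    FreeAlgebra ℂ (Fin n ⊕ Fin n) → FreeAlgebra ℂ (Fin n ⊕ Fin n) → Prop
  | yy (i j : Fin n) (h : i < j) : AqRel n q lam
      (FreeAlgebra.ι ℂ (Sum.inl j) * FreeAlgebra.ι ℂ (Sum.inl i))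
      (lam j i • (FreeAlgebra.ι ℂ (Sum.inl i) * FreeAlgebra.ι ℂ (Sum.inl j)))
  | yx (i j : Fin n) (h : i < j) : AqRel n q lam
      (FreeAlgebra.ι ℂ (Sum.inl j) * FreeAlgebra.ι ℂ (Sum.inr i))
      (lam i j • (FreeAlgebra.ι ℂ (Sum.inr i) * FreeAlgebra.ι ℂ (Sum.inl j)))
  | xy (i j : Fin n) (h : i < j) : AqRel n q lam
      (FreeAlgebra.ι ℂ (Sum.inr j) * FreeAlgebra.ι ℂ (Sum.inl i))
      ((q i * lam i j) • (FreeAlgebra.ι ℂ (Sum.inl i) * FreeAlgebra.ι ℂ (Sum.inr j)))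
  | xx (i j : Fin n) (h : i < j) : AqRel n q lam
      (FreeAlgebra.ι ℂ (Sum.inr j) * FreeAlgebra.ι ℂ (Sum.inr i))
      (((q i)⁻¹ * (lam i j)⁻¹) • (FreeAlgebra.ι ℂ (Sum.inr i) * FreeAlgebra.ι ℂ (Sum.inr j)))
  | weyl (i : Fin n) : AqRel n q lam
      (FreeAlgebra.ι ℂ (Sum.inr i) * FreeAlgebra.ι ℂ (Sum.inl i)
        - q i • (FreeAlgebra.ι ℂ (Sum.inl i) * FreeAlgebra.ι ℂ (Sum.inr i)))
      ((q i - 1) • (1 + ∑ k ∈ Finset.Iio i,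
        FreeAlgebra.ι ℂ (Sum.inl k) * FreeAlgebra.ι ℂ (Sum.inr k)))

/-- The generator `y_i` of `A_q`. -/
noncomputable def Yq (n : ℕ) (q : Fin n → ℂ) (lam : Fin n → Fin n → ℂ) (i : Fin n) :
    RingQuot (AqRel n q lam) :=
  RingQuot.mkAlgHom ℂ (AqRel n q lam) (FreeAlgebra.ι ℂ (Sum.inl i))

/-- The generator `x_i` of `A_q`. -/
noncomputable def Xq (n : ℕ) (q : Fin n → ℂ) (lam : Fin n → Fin n → ℂ) (i : Fin n) :
    RingQuot (AqRel n q lam) :=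
  RingQuot.mkAlgHom ℂ (AqRel n q lam) (FreeAlgebra.ι ℂ (Sum.inr i))

/-- The element `z_m = 1 + ∑_{k=1}^m y_k x_k` of `A_q` (1-indexed: the sum is over
the generators with (0-indexed) index `< m`). -/
noncomputable def Zq (n : ℕ) (q : Fin n → ℂ) (lam : Fin n → Fin n → ℂ) (m : ℕ) :
    RingQuot (AqRel n q lam) :=
  1 + ∑ k ∈ Finset.univ.filter (fun k : Fin n => (k : ℕ) < m), Yq n q lam k * Xq n q lam k

/-- The generator `y_i` of the multi-parameter Poisson Weyl algebra
`A₁ = ℂ[y_1, x_1, …, y_n, x_n]`. -/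
noncomputable def yP (n : ℕ) (i : Fin n) : MvPolynomial (Fin n ⊕ Fin n) ℂ :=
  MvPolynomial.X (Sum.inl i)

/-- The generator `x_i` of the multi-parameter Poisson Weyl algebra. -/
noncomputable def xP (n : ℕ) (i : Fin n) : MvPolynomial (Fin n ⊕ Fin n) ℂ :=
  MvPolynomial.X (Sum.inr i)

/-- The element `z_m = 1 + ∑_{k=1}^m y_k x_k` of the Poisson Weyl algebra
(1-indexed: the sum is over generators with (0-indexed) index `< m`). -/
noncomputable def zP (n : ℕ) (m : ℕ) : MvPolynomial (Fin n ⊕ Fin n) ℂ :=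
  1 + ∑ k ∈ Finset.univ.filter (fun k : Fin n => (k : ℕ) < m), yP n k * xP n k

/-- The set `M_n = {z_1, z_2, y_2, x_2, …, z_n, y_n, x_n}` inside `A_q`
(1-indexed; in 0-indexed terms the y's and x's have index `≥ 1`). -/
noncomputable def MnQ (n : ℕ) (q : Fin n → ℂ) (lam : Fin n → Fin n → ℂ) :
    Set (RingQuot (AqRel n q lam)) :=
  {p | p = Zq n q lam 1 ∨ ∃ i : Fin n, 1 ≤ (i : ℕ) ∧
    (p = Zq n q lam ((i : ℕ) + 1) ∨ p = Yq n q lam i ∨ p = Xq n q lam i)}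

/-- A subset `T ⊆ M_n` of `A_q` is admissible if, for `2 ≤ i ≤ n` (1-indexed),
`y_i ∈ T` or `x_i ∈ T` iff `z_i ∈ T` and `z_{i-1} ∈ T`. -/
def AdmissibleQ (n : ℕ) (q : Fin n → ℂ) (lam : Fin n → Fin n → ℂ)
    (T : Set (RingQuot (AqRel n q lam))) : Prop :=
  T ⊆ MnQ n q lam ∧ ∀ i : Fin n, 1 ≤ (i : ℕ) →
    ((Yq n q lam i ∈ T ∨ Xq n q lam i ∈ T) ↔
      (Zq n q lam ((i : ℕ) + 1) ∈ T ∧ Zq n q lam (i : ℕ) ∈ T))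

/-- The set `M_n = {z_1, z_2, y_2, x_2, …, z_n, y_n, x_n}` inside the
multi-parameter Poisson Weyl algebra `A₁`. -/
noncomputable def MnP (n : ℕ) : Set (MvPolynomial (Fin n ⊕ Fin n) ℂ) :=
  {p | p = zP n 1 ∨ ∃ i : Fin n, 1 ≤ (i : ℕ) ∧
    (p = zP n ((i : ℕ) + 1) ∨ p = yP n i ∨ p = xP n i)}

/-- A subset `T ⊆ M_n` of `A₁` is admissible if, for `2 ≤ i ≤ n` (1-indexed),
`y_i ∈ T` or `x_i ∈ T` iff `z_i ∈ T` and `z_{i-1} ∈ T`. -/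
def AdmissibleP (n : ℕ) (T : Set (MvPolynomial (Fin n ⊕ Fin n) ℂ)) : Prop :=
  T ⊆ MnP n ∧ ∀ i : Fin n, 1 ≤ (i : ℕ) →
    ((yP n i ∈ T ∨ xP n i ∈ T) ↔ (zP n ((i : ℕ) + 1) ∈ T ∧ zP n (i : ℕ) ∈ T))

/-! ### The quantized algebra -/

/-- The elementwise form of primeness for two-sided ideals. -/
lemma IsPrimeTS.mem_or_mem {R : Type} [Ring R] {P : TwoSidedIdeal R} (hP : IsPrimeTS P)
    {y x : R} (h : ∀ a, y * a * x ∈ P) : y ∈ P ∨ x ∈ P := by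
  have key : ∀ a ∈ TwoSidedIdeal.span {y}, ∀ b ∈ TwoSidedIdeal.span {x}, a * b ∈ P := by
    -- `y R x ⊆ P` propagates first to `(y) R x ⊆ P`, then to `(y) (x) ⊆ P`.
    have h1 : ∀ a ∈ TwoSidedIdeal.span {y}, ∀ r, a * r * x ∈ P := by
      intro a ha
      induction ha using TwoSidedIdeal.span_induction with
      | mem u hu =>
        rw [Set.mem_singleton_iff] at hu
        subst hu
        exact h
      | zero => intro r; simp [P.zero_mem]
      | add u v _ _ hu hv => intro r; rw [add_mul, add_mul]; exact P.add_mem (hu r) (hv r)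
      | neg u _ hu => intro r; rw [neg_mul, neg_mul]; exact P.neg_mem (hu r)
      | left_absorb s u _ hu =>
        intro r; rw [mul_assoc s, mul_assoc s]; exact P.mul_mem_left _ _ (hu r)
      | right_absorb s u _ hu => intro r; rw [mul_assoc u]; exact hu _
    intro a ha b hb
    have h2 : ∀ r, a * r * b ∈ P := by
      induction hb using TwoSidedIdeal.span_induction with
      | mem u hu =>
        rw [Set.mem_singleton_iff] at hu
        subst hu
        exact h1 a ha
      | zero => intro r; simp [P.zero_mem]
      | add u v _ _ hu hv => intro r; rw [mul_add]; exact P.add_mem (hu r) (hv r)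
      | neg u _ hu => intro r; rw [mul_neg]; exact P.neg_mem (hu r)
      | left_absorb s u _ hu =>
        intro r; rw [← mul_assoc, mul_assoc a]; exact hu _
      | right_absorb s u _ hu =>
        intro r; rw [← mul_assoc]; exact P.mul_mem_right _ _ (hu r)
    simpa using h2 1
  rcases hP.2 _ _ key with h | h
  · exact Or.inl (h (TwoSidedIdeal.subset_span rfl))
  · exact Or.inr (h (TwoSidedIdeal.subset_span rfl))

section Quantum

variable {n : ℕ} {q : Fin n → ℂ} {lam : Fin n → Fin n → ℂ}

lemma Aq_induction {p : RingQuot (AqRel n q lam) → Prop}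
    (hc : ∀ c : ℂ, p (algebraMap ℂ _ c)) (hY : ∀ i, p (Yq n q lam i)) (hX : ∀ i, p (Xq n q lam i))
    (hadd : ∀ a b, p a → p b → p (a + b)) (hmul : ∀ a b, p a → p b → p (a * b)) (a) : p a := by
  obtain ⟨a, rfl⟩ := RingQuot.mkAlgHom_surjective ℂ (AqRel n q lam) a
  induction a using FreeAlgebra.induction with
  | grade0 c => rw [AlgHom.commutes]; exact hc c
  | grade1 s =>
    rcases s with i | i
    · exact hY i
    · exact hX i
  | mul a b ha hb => rw [map_mul]; exact hmul _ _ ha hb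
  | add a b ha hb => rw [map_add]; exact hadd _ _ ha hb

lemma smul_mem_of_mem {P : TwoSidedIdeal (RingQuot (AqRel n q lam))} {a} (c : ℂ) (h : a ∈ P) :
    c • a ∈ P := by
  rw [Algebra.smul_def]; exact P.mul_mem_left _ _ h

/-- If `y` satisfies `y g ∈ A_q y + P` for every generator `g`, then `y A_q ⊆ A_q y + P`, so
`y x ∈ P` implies `y A_q x ⊆ P`. -/
lemma mul_mul_mem_of_normal {P : TwoSidedIdeal (RingQuot (AqRel n q lam))}
    {y x : RingQuot (AqRel n q lam)}
    (hY : ∀ i, ∃ b, y * Yq n q lam i - b * y ∈ P) (hX : ∀ i, ∃ b, y * Xq n q lam i - b * y ∈ P)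
    (hyx : y * x ∈ P) (a) : y * a * x ∈ P := by
  have key : ∃ b, y * a - b * y ∈ P := by
    induction a using Aq_induction with
    | hc c => exact ⟨algebraMap ℂ _ c, by rw [Algebra.commutes, sub_self]; exact P.zero_mem⟩
    | hY i => exact hY i
    | hX i => exact hX i
    | hadd a a' ha ha' =>
      obtain ⟨b, hb⟩ := ha
      obtain ⟨b', hb'⟩ := ha'
      refine ⟨b + b', ?_⟩
      have : y * (a + a') - (b + b') * y = (y * a - b * y) + (y * a' - b' * y) := by noncomm_ring
      rw [this]; exact P.add_mem hb hb'
    | hmul a a' ha ha' =>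
      obtain ⟨b, hb⟩ := ha
      obtain ⟨b', hb'⟩ := ha'
      refine ⟨b * b', ?_⟩
      have : y * (a * a') - (b * b') * y = (y * a - b * y) * a' + b * (y * a' - b' * y) := by
        simp only [sub_mul, mul_sub, mul_assoc]; abel
      rw [this]; exact P.add_mem (P.mul_mem_right _ _ hb) (P.mul_mem_left _ _ hb')
  obtain ⟨b, hb⟩ := key
  have : y * a * x = (y * a - b * y) * x + b * (y * x) := by
    simp only [sub_mul, mul_assoc]; abel
  rw [this]
  exact P.add_mem (P.mul_mem_right _ _ hb) (P.mul_mem_left _ _ hyx)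

lemma Yq_mul_Yq {i j : Fin n} (h : i < j) :
    Yq n q lam j * Yq n q lam i = lam j i • (Yq n q lam i * Yq n q lam j) := by
  simpa [Yq, Xq] using RingQuot.mkAlgHom_rel ℂ (AqRel.yy (q := q) (lam := lam) i j h)

lemma Yq_mul_Xq {i j : Fin n} (h : i < j) :
    Yq n q lam j * Xq n q lam i = lam i j • (Xq n q lam i * Yq n q lam j) := by
  simpa [Yq, Xq] using RingQuot.mkAlgHom_rel ℂ (AqRel.yx (q := q) (lam := lam) i j h)

lemma Xq_mul_Yq {i j : Fin n} (h : i < j) :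
    Xq n q lam j * Yq n q lam i = (q i * lam i j) • (Yq n q lam i * Xq n q lam j) := by
  simpa only [Yq, Xq, map_mul, map_smul] using
    RingQuot.mkAlgHom_rel ℂ (AqRel.xy (q := q) (lam := lam) i j h)

lemma Zq_succ (i : Fin n) :
    Zq n q lam ((i : ℕ) + 1) = Zq n q lam (i : ℕ) + Yq n q lam i * Xq n q lam i := by
  have : Finset.univ.filter (fun k : Fin n => (k : ℕ) < (i : ℕ) + 1)
      = insert i (Finset.univ.filter (fun k : Fin n => (k : ℕ) < (i : ℕ))) := by
    ext k; simp [Fin.ext_iff]; omega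
  rw [Zq, Zq, this, Finset.sum_insert (by simp)]
  abel

lemma Xq_mul_Yq_self (i : Fin n) :
    Xq n q lam i * Yq n q lam i
      = q i • (Yq n q lam i * Xq n q lam i) + (q i - 1) • Zq n q lam (i : ℕ) := by
  have h := RingQuot.mkAlgHom_rel ℂ (AqRel.weyl (q := q) (lam := lam) i)
  have hI : Finset.univ.filter (fun k : Fin n => (k : ℕ) < (i : ℕ)) = Finset.Iio i := by
    ext k; simp
  rw [← sub_eq_iff_eq_add', Zq, hI]
  simpa only [Yq, Xq, map_mul, map_smul, map_sub, map_add, map_one, map_sum] using h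

lemma commutator_eq (i : Fin n) :
    Xq n q lam i * Yq n q lam i - Yq n q lam i * Xq n q lam i
      = (q i - 1) • Zq n q lam ((i : ℕ) + 1) := by
  rw [Xq_mul_Yq_self, Zq_succ]; module

lemma Zq_mem_of_gen_mem {P : TwoSidedIdeal (RingQuot (AqRel n q lam))} {i : Fin n}
    (hq1 : q i ≠ 1) (h : Yq n q lam i ∈ P ∨ Xq n q lam i ∈ P) :
    Zq n q lam ((i : ℕ) + 1) ∈ P ∧ Zq n q lam (i : ℕ) ∈ P := by
  have hyx : Yq n q lam i * Xq n q lam i ∈ P :=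
    h.elim (P.mul_mem_right _ _) (P.mul_mem_left _ _)
  have hxy : Xq n q lam i * Yq n q lam i ∈ P :=
    h.elim (P.mul_mem_left _ _) (P.mul_mem_right _ _)
  have hz : Zq n q lam ((i : ℕ) + 1) ∈ P := by
    have := smul_mem_of_mem (q i - 1)⁻¹ (P.sub_mem hxy hyx)
    rwa [commutator_eq, smul_smul, inv_mul_cancel₀ (sub_ne_zero.2 hq1), one_smul] at this
  refine ⟨hz, ?_⟩
  have := P.sub_mem hz hyx
  rwa [Zq_succ, add_sub_cancel_right] at this

lemma gen_mem_of_Zq_mem (hq0 : ∀ i, q i ≠ 0) (hlam : ∀ i j, lam i j * lam j i = 1)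
    {P : TwoSidedIdeal (RingQuot (AqRel n q lam))} (hP : IsPrimeTS P) {i : Fin n}
    (h1 : Zq n q lam ((i : ℕ) + 1) ∈ P) (h0 : Zq n q lam (i : ℕ) ∈ P) :
    Yq n q lam i ∈ P ∨ Xq n q lam i ∈ P := by
  have hl : ∀ i j, lam i j ≠ 0 := fun i j => left_ne_zero_of_mul_eq_one (hlam i j)
  have hyx : Yq n q lam i * Xq n q lam i ∈ P := by
    have := P.sub_mem h1 h0
    rwa [Zq_succ, add_sub_cancel_left] at this
  refine hP.mem_or_mem (mul_mul_mem_of_normal (fun j => ?_) (fun j => ?_) hyx)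
  · rcases lt_trichotomy i j with h | h | h
    · refine ⟨(lam j i)⁻¹ • Yq n q lam j, ?_⟩
      rw [smul_mul_assoc, Yq_mul_Yq h, smul_smul, inv_mul_cancel₀ (hl _ _), one_smul, sub_self]
      exact P.zero_mem
    · subst h; exact ⟨Yq n q lam i, by rw [sub_self]; exact P.zero_mem⟩
    · refine ⟨lam i j • Yq n q lam j, ?_⟩
      rw [smul_mul_assoc, Yq_mul_Yq h, sub_self]
      exact P.zero_mem
  · rcases lt_trichotomy i j with h | h | h
    · refine ⟨(q i * lam i j)⁻¹ • Xq n q lam j, ?_⟩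
      rw [smul_mul_assoc, Xq_mul_Yq h, smul_smul,
        inv_mul_cancel₀ (mul_ne_zero (hq0 _) (hl _ _)), one_smul, sub_self]
      exact P.zero_mem
    · subst h; exact ⟨0, by rw [zero_mul, sub_zero]; exact hyx⟩
    · refine ⟨lam j i • Xq n q lam j, ?_⟩
      rw [smul_mul_assoc, Yq_mul_Xq h, sub_self]
      exact P.zero_mem

lemma Zq_mem_MnQ {i : Fin n} (hi : 1 ≤ (i : ℕ)) : Zq n q lam (i : ℕ) ∈ MnQ n q lam := by
  rcases hi.eq_or_lt with h | h
  · left; rw [← h]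
  · refine Or.inr ⟨⟨(i : ℕ) - 1, by omega⟩, by simp; omega, Or.inl ?_⟩
    congr 1
    simp; omega

end Quantum

/-! ### The Poisson algebra -/

section Poisson

variable {n : ℕ}

lemma zP_succ (i : Fin n) : zP n ((i : ℕ) + 1) = zP n (i : ℕ) + yP n i * xP n i := by
  have : Finset.univ.filter (fun k : Fin n => (k : ℕ) < (i : ℕ) + 1)
      = insert i (Finset.univ.filter (fun k : Fin n => (k : ℕ) < (i : ℕ))) := by
    ext k; simp [Fin.ext_iff]; omega
  rw [zP, zP, this, Finset.sum_insert (by simp)]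
  ring

lemma zP_mem_MnP {i : Fin n} (hi : 1 ≤ (i : ℕ)) : zP n (i : ℕ) ∈ MnP n := by
  rcases hi.eq_or_lt with h | h
  · left; rw [← h]
  · refine Or.inr ⟨⟨(i : ℕ) - 1, by omega⟩, by simp; omega, Or.inl ?_⟩
    congr 1
    simp; omega

lemma Ideal.csmul_mem {I : Ideal (MvPolynomial (Fin n ⊕ Fin n) ℂ)} {a} (c : ℂ) (h : a ∈ I) :
    c • a ∈ I := by
  rw [MvPolynomial.smul_eq_C_mul]; exact I.mul_mem_left _ h

lemma br_one_left (B : PoissonBr (MvPolynomial (Fin n ⊕ Fin n) ℂ)) (b) : B.br 1 b = 0 := by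
  have := B.leibniz 1 1 b
  simpa using this

/-- The sum of a Poisson ideal `P` and the principal ideal `(g)` is a Poisson ideal as soon as it
contains the brackets of the generators of the algebra with `g`. -/
lemma isPoissonIdeal_sup_span (B : PoissonBr (MvPolynomial (Fin n ⊕ Fin n) ℂ))
    (hBsmul : ∀ (c : ℂ) (a b : MvPolynomial (Fin n ⊕ Fin n) ℂ), B.br (c • a) b = c • B.br a b)
    {P : Ideal (MvPolynomial (Fin n ⊕ Fin n) ℂ)} (hP : IsPoissonIdeal B.br P)
    {g : MvPolynomial (Fin n ⊕ Fin n) ℂ}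
    (hy : ∀ j, B.br (yP n j) g ∈ P ⊔ Ideal.span {g})
    (hx : ∀ j, B.br (xP n j) g ∈ P ⊔ Ideal.span {g}) :
    IsPoissonIdeal B.br (P ⊔ Ideal.span {g}) := by
  have hg : g ∈ P ⊔ Ideal.span {g} := Ideal.mem_sup_right (Ideal.mem_span_singleton_self g)
  have h1 : ∀ b, B.br b g ∈ P ⊔ Ideal.span {g} := by
    intro b
    induction b using MvPolynomial.induction_on with
    | C c =>
      have : (MvPolynomial.C c : MvPolynomial (Fin n ⊕ Fin n) ℂ) = c • 1 := by
        rw [MvPolynomial.smul_eq_C_mul, mul_one]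
      rw [this, hBsmul, br_one_left, smul_zero]
      exact Ideal.zero_mem _
    | add a b ha hb => rw [B.add_left]; exact Ideal.add_mem _ ha hb
    | mul_X a s ha =>
      rw [B.leibniz]
      refine Ideal.add_mem _ (Ideal.mul_mem_left _ _ ?_) (Ideal.mul_mem_right _ _ ha)
      rcases s with j | j
      · exact hy j
      · exact hx j
  intro a ha b
  obtain ⟨p, hp, u, hu, rfl⟩ := Submodule.mem_sup.1 ha
  obtain ⟨c, rfl⟩ := Ideal.mem_span_singleton'.1 hu
  rw [B.add_left, B.leibniz]
  refine Ideal.add_mem _ (Ideal.mem_sup_left (hP p hp b))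
    (Ideal.add_mem _ (Ideal.mul_mem_left _ _ ?_) (Ideal.mul_mem_left _ _ hg))
  rw [B.skew]
  exact neg_mem (h1 b)

lemma zP_mem_of_gen_mem (B : PoissonBr (MvPolynomial (Fin n ⊕ Fin n) ℂ)) {c : ℂ} (hc : c ≠ 0)
    {i : Fin n} (hB : B.br (xP n i) (yP n i) = c • zP n ((i : ℕ) + 1))
    {P : Ideal (MvPolynomial (Fin n ⊕ Fin n) ℂ)} (hP : IsPoissonIdeal B.br P)
    (h : yP n i ∈ P ∨ xP n i ∈ P) : zP n ((i : ℕ) + 1) ∈ P ∧ zP n (i : ℕ) ∈ P := by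
  have hyx : yP n i * xP n i ∈ P := h.elim (P.mul_mem_right _) (P.mul_mem_left _)
  have hbr : B.br (xP n i) (yP n i) ∈ P := by
    rcases h with h | h
    · rw [B.skew]; exact neg_mem (hP _ h _)
    · exact hP _ h _
  have hz : zP n ((i : ℕ) + 1) ∈ P := by
    have := Ideal.csmul_mem c⁻¹ hbr
    rwa [hB, smul_smul, inv_mul_cancel₀ hc, one_smul] at this
  refine ⟨hz, ?_⟩
  have := P.sub_mem hz hyx
  rwa [zP_succ, add_sub_cancel_right] at this

/-- If `z_i, z_{i-1} ∈ P` then one of `y_i`, `x_i` lies in the Poisson prime `P`, provided the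
brackets of `y_i` and `x_i` with the other generators are multiples of `y_i` and `x_i`. -/
lemma gen_mem_of_zP_mem (B : PoissonBr (MvPolynomial (Fin n ⊕ Fin n) ℂ))
    (hBsmul : ∀ (c : ℂ) (a b : MvPolynomial (Fin n ⊕ Fin n) ℂ), B.br (c • a) b = c • B.br a b)
    {c : ℂ} {i : Fin n} (hB : B.br (xP n i) (yP n i) = c • zP n ((i : ℕ) + 1))
    (hyy : ∀ j, j ≠ i → yP n i ∣ B.br (yP n j) (yP n i))
    (hxy : ∀ j, j ≠ i → yP n i ∣ B.br (xP n j) (yP n i))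
    (hyx : ∀ j, j ≠ i → xP n i ∣ B.br (yP n j) (xP n i))
    (hxx : ∀ j, j ≠ i → xP n i ∣ B.br (xP n j) (xP n i))
    {P : Ideal (MvPolynomial (Fin n ⊕ Fin n) ℂ)} (hP : IsPoissonPrime B.br P)
    (h1 : zP n ((i : ℕ) + 1) ∈ P) (h0 : zP n (i : ℕ) ∈ P) :
    yP n i ∈ P ∨ xP n i ∈ P := by
  have hmul : yP n i * xP n i ∈ P := by
    have := P.sub_mem h1 h0
    rwa [zP_succ, add_sub_cancel_left] at this
  have hbr : B.br (xP n i) (yP n i) ∈ P := by rw [hB]; exact Ideal.csmul_mem c h1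
  have hself : ∀ a, B.br a a = 0 := fun a => by
    have := B.skew a a
    exact self_eq_neg.1 this
  have hdvd : ∀ {g b}, g ∣ b → b ∈ P ⊔ Ideal.span {g} := fun h =>
    Ideal.mem_sup_right (Ideal.mem_span_singleton.2 h)
  have hI : IsPoissonIdeal B.br (P ⊔ Ideal.span {yP n i}) := by
    refine isPoissonIdeal_sup_span B hBsmul hP.1 (fun j => ?_) (fun j => ?_)
    · rcases eq_or_ne j i with rfl | h
      · rw [hself]; exact Ideal.zero_mem _
      · exact hdvd (hyy j h)
    · rcases eq_or_ne j i with rfl | h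
      · exact Ideal.mem_sup_left hbr
      · exact hdvd (hxy j h)
  have hJ : IsPoissonIdeal B.br (P ⊔ Ideal.span {xP n i}) := by
    refine isPoissonIdeal_sup_span B hBsmul hP.1 (fun j => ?_) (fun j => ?_)
    · rcases eq_or_ne j i with rfl | h
      · rw [B.skew]; exact Ideal.mem_sup_left (neg_mem hbr)
      · exact hdvd (hyx j h)
    · rcases eq_or_ne j i with rfl | h
      · rw [hself]; exact Ideal.zero_mem _
      · exact hdvd (hxx j h)
  have hIJ : ∀ a ∈ P ⊔ Ideal.span {yP n i}, ∀ b ∈ P ⊔ Ideal.span {xP n i}, a * b ∈ P := by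
    intro a ha b hb
    obtain ⟨p, hp, u, hu, rfl⟩ := Submodule.mem_sup.1 ha
    obtain ⟨s, rfl⟩ := Ideal.mem_span_singleton'.1 hu
    obtain ⟨p', hp', v, hv, rfl⟩ := Submodule.mem_sup.1 hb
    obtain ⟨t, rfl⟩ := Ideal.mem_span_singleton'.1 hv
    have : (p + s * yP n i) * (p' + t * xP n i)
        = (p' + t * xP n i) * p + (s * yP n i) * p' + (s * t) * (yP n i * xP n i) := by ring
    rw [this]
    exact P.add_mem (P.add_mem (P.mul_mem_left _ hp) (P.mul_mem_left _ hp'))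
      (P.mul_mem_left _ hmul)
  rcases hP.2.2 _ _ hI hJ hIJ with h | h
  · exact Or.inl (h (Ideal.mem_sup_right (Ideal.mem_span_singleton_self _)))
  · exact Or.inr (h (Ideal.mem_sup_right (Ideal.mem_span_singleton_self _)))

end Poisson

/-- (1) if `P` is a prime two-sided ideal of `A_q` then `P ∩ M_n` is
admissible; (2) if `P` is a Poisson prime ideal of `A₁` then `P ∩ M_n` is admissible. -/
theorem stmt_13 (n r : ℕ)
    -- Q and Λ with G(Q,Λ) torsion free, a basis η of G(Q,Λ), and ℚ-linearly
    -- independent complex numbers μ; `c̃'(1) = ∑ s_k μ_k` for `c = ∏ η_k ^ s_k`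
    (q : Fin n → ℂ) (hq0 : ∀ i, q i ≠ 0) (hq1 : ∀ i, q i ≠ 1)
    (lam : Fin n → Fin n → ℂ) (hlam : ∀ i j, lam i j * lam j i = 1)
    (hlamii : ∀ i, lam i i = 1)
    (η : Fin r → ℂ) (hη0 : ∀ k, η k ≠ 0)
    (hfree : ∀ a : Fin r → ℤ, ∏ k, η k ^ a k = 1 → a = 0)
    (μ : Fin r → ℂ) (hμ : LinearIndependent ℚ μ)
    (sq : Fin n → Fin r → ℤ) (hsq : ∀ i, q i = ∏ k, η k ^ sq i k)
    (slam : Fin n → Fin n → Fin r → ℤ) (hslam : ∀ i j, lam i j = ∏ k, η k ^ slam i j k)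
    (dq : Fin n → ℂ) (hdq : ∀ i, dq i = ∑ k, (sq i k : ℂ) * μ k)
    (dlam : Fin n → Fin n → ℂ) (hdlam : ∀ i j, dlam i j = ∑ k, (slam i j k : ℂ) * μ k)
    -- the Poisson bracket of the multi-parameter Poisson Weyl algebra `A₁`
    (B : PoissonBr (MvPolynomial (Fin n ⊕ Fin n) ℂ))
    (hBsmul : ∀ (c : ℂ) (a b : MvPolynomial (Fin n ⊕ Fin n) ℂ), B.br (c • a) b = c • B.br a b)
    (hByy : ∀ i j : Fin n, i < j → B.br (yP n j) (yP n i) = dlam j i • (yP n i * yP n j))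
    (hByx : ∀ i j : Fin n, i < j → B.br (yP n j) (xP n i) = dlam i j • (xP n i * yP n j))
    (hBxy : ∀ i j : Fin n, i < j →
      B.br (xP n j) (yP n i) = (dq i + dlam i j) • (yP n i * xP n j))
    (hBxx : ∀ i j : Fin n, i < j →
      B.br (xP n j) (xP n i) = (-(dq i + dlam i j)) • (xP n i * xP n j))
    (hBxyi : ∀ i : Fin n, B.br (xP n i) (yP n i) = dq i • zP n ((i : ℕ) + 1))
    :
    (∀ P : TwoSidedIdeal (RingQuot (AqRel n q lam)), IsPrimeTS P →
      AdmissibleQ n q lam ((P : Set (RingQuot (AqRel n q lam))) ∩ MnQ n q lam)) ∧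
    (∀ P : Ideal (MvPolynomial (Fin n ⊕ Fin n) ℂ), IsPoissonPrime B.br P →
      AdmissibleP n ((P : Set (MvPolynomial (Fin n ⊕ Fin n) ℂ)) ∩ MnP n)) := by
  have hdq0 : ∀ i, dq i ≠ 0 := by
    intro i h
    rw [hdq] at h
    have hs : ∀ k, ((sq i k : ℤ) : ℚ) = 0 := by
      refine Fintype.linearIndependent_iff.1 hμ (fun k => (sq i k : ℚ)) ?_
      rw [← h]
      refine Finset.sum_congr rfl fun k _ => ?_
      rw [Rat.smul_def]; norm_cast
    apply hq1 i
    rw [hsq]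
    refine Finset.prod_eq_one fun k _ => ?_
    rw [Int.cast_eq_zero.1 (hs k), zpow_zero]
  refine ⟨fun P hP => ⟨Set.inter_subset_right, fun i hi => ⟨?_, ?_⟩⟩,
    fun P hP => ⟨Set.inter_subset_right, fun i hi => ⟨?_, ?_⟩⟩⟩
  · intro h
    obtain ⟨h1, h0⟩ := Zq_mem_of_gen_mem (hq1 i) (h.imp And.left And.left)
    exact ⟨⟨h1, Or.inr ⟨i, hi, Or.inl rfl⟩⟩, ⟨h0, Zq_mem_MnQ hi⟩⟩
  · rintro ⟨⟨h1, -⟩, ⟨h0, -⟩⟩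
    exact (gen_mem_of_Zq_mem hq0 hlam hP h1 h0).imp
      (fun h => ⟨h, Or.inr ⟨i, hi, Or.inr (Or.inl rfl)⟩⟩)
      (fun h => ⟨h, Or.inr ⟨i, hi, Or.inr (Or.inr rfl)⟩⟩)
  · intro h
    obtain ⟨h1, h0⟩ :=
      zP_mem_of_gen_mem B (hdq0 i) (hBxyi i) hP.1 (h.imp And.left And.left)
    exact ⟨⟨h1, Or.inr ⟨i, hi, Or.inl rfl⟩⟩, ⟨h0, zP_mem_MnP hi⟩⟩
  · rintro ⟨⟨h1, -⟩, ⟨h0, -⟩⟩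
    have hl : ∀ (c : ℂ) (a b : MvPolynomial (Fin n ⊕ Fin n) ℂ), a ∣ c • (a * b) :=
      fun c a b => by rw [← mul_smul_comm]; exact dvd_mul_right _ _
    have hr : ∀ (c : ℂ) (a b : MvPolynomial (Fin n ⊕ Fin n) ℂ), b ∣ c • (a * b) :=
      fun c a b => by rw [← smul_mul_assoc]; exact dvd_mul_left _ _
    refine (gen_mem_of_zP_mem B hBsmul (hBxyi i) (fun j hj => ?_) (fun j hj => ?_)
      (fun j hj => ?_) (fun j hj => ?_) hP h1 h0).imp
      (fun h => ⟨h, Or.inr ⟨i, hi, Or.inr (Or.inl rfl)⟩⟩)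
      (fun h => ⟨h, Or.inr ⟨i, hi, Or.inr (Or.inr rfl)⟩⟩)
    · rcases hj.lt_or_gt with h | h
      · rw [B.skew, hByy j i h, dvd_neg]; exact hr _ _ _
      · rw [hByy i j h]; exact hl _ _ _
    · rcases hj.lt_or_gt with h | h
      · rw [B.skew, hByx j i h, dvd_neg]; exact hr _ _ _
      · rw [hBxy i j h]; exact hl _ _ _
    · rcases hj.lt_or_gt with h | h
      · rw [B.skew, hBxy j i h, dvd_neg]; exact hr _ _ _
      · rw [hByx i j h]; exact hl _ _ _
    · rcases hj.lt_or_gt with h | h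
      · rw [B.skew, hBxx j i h, dvd_neg]; exact hr _ _ _
      · rw [hBxx i j h]; exact hl _ _ _
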